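/- Let u be a nonconstant harmonic polynomial on ℝ² of degree d, and let k be the (finite) number of connected components of {u ≠ 0}. Then k/2 ≤ d ≤ k − 1, and both equalities hold simultaneously if and only if d = 1 (i.e. u is an affine function). -/

import Mathlib

open MeasureTheory Metric Filter

/-- The set of connected components of a subset `S` of a topological space. -/
def nodalComponents {X : Type*} [TopologicalSpace X] (S : Set X) : Set (Set X) :=
  {C | ∃ x ∈ S, connectedComponentIn S x = C}

/-- A polynomial `P ∈ ℝ[x₁,…,xₙ]` is harmonic if `∑ i, ∂²P/∂xᵢ²` is the zero polynomial. -/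
def IsHarmonicPoly {n : ℕ} (P : MvPolynomial (Fin n) ℝ) : Prop :=
  ∑ i, MvPolynomial.pderiv i (MvPolynomial.pderiv i P) = 0

/-- The polynomial function on ℝⁿ associated with `P ∈ ℝ[x₁,…,xₙ]`. -/
noncomputable def polyFun {n : ℕ} (P : MvPolynomial (Fin n) ℝ)
    (x : EuclideanSpace ℝ (Fin n)) : ℝ :=
  MvPolynomial.eval (fun i => x i) P

open Polynomial Topology in
lemma local_root (f : ℂ[X]) (hd : 0 < f.natDegree) (p : ℂ) :
    ∃ e : OpenPartialHomeomorph ℂ ℂ, p ∈ e.source ∧ e p = 0 ∧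
      ∀ z ∈ e.source, f.eval z = f.eval p + (e z) ^ ((derivative f).rootMultiplicity p + 1) := by
  set g : ℂ[X] := f - C (f.eval p) with hg
  have hg0 : g ≠ 0 := by
    intro h
    have : f = C (f.eval p) := sub_eq_zero.mp h
    rw [this] at hd
    simp at hd
  have hroot : g.IsRoot p := by simp [hg]
  have hn : (derivative f).rootMultiplicity p + 1 = g.rootMultiplicity p := by
    have h1 := derivative_rootMultiplicity_of_root hroot
    have h2 : 0 < g.rootMultiplicity p := (rootMultiplicity_pos hg0).2 hroot
    have h3 : derivative g = derivative f := by simp [hg]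
    rw [h3] at h1
    omega
  rw [hn]
  obtain ⟨h, hh, hnd⟩ := exists_eq_pow_rootMultiplicity_mul_and_not_dvd g hg0 p
  set n := g.rootMultiplicity p with hndef
  have hnpos : n ≠ 0 := by omega
  have hhp : h.eval p ≠ 0 := by
    intro h0
    exact hnd (dvd_iff_isRoot.2 h0)
  obtain ⟨a, ha⟩ := IsAlgClosed.exists_pow_nat_eq (h.eval p) (Nat.pos_of_ne_zero hnpos)
  have ha0 : a ≠ 0 := by
    rintro rfl
    rw [zero_pow hnpos] at ha
    exact hhp ha.symm
  set φ : ℂ → ℂ := fun z => (z - p) * (a * (h.eval z / h.eval p) ^ ((n : ℂ)⁻¹)) with hφ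
  have hder : HasStrictDerivAt φ a p := by
    have h1 : HasStrictDerivAt (fun z : ℂ => z - p) 1 p := (hasStrictDerivAt_id p).sub_const p
    have h2 : AnalyticAt ℂ (fun z : ℂ => a * (h.eval z / h.eval p) ^ ((n : ℂ)⁻¹)) p := by
      have : AnalyticAt ℂ (fun z : ℂ => h.eval z / h.eval p) p :=
        (AnalyticOnNhd.eval_polynomial h p (Set.mem_univ p)).div_const
      refine analyticAt_const.mul (this.cpow analyticAt_const ?_)
      simp [hhp]
    have h3 := h1.mul h2.hasStrictDerivAt
    have key : (1 : ℂ) * (a * (h.eval p / h.eval p) ^ ((n : ℂ)⁻¹)) + (p - p) *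
        deriv (fun z : ℂ => a * (h.eval z / h.eval p) ^ ((n : ℂ)⁻¹)) p = a := by simp [hhp]
    rw [key] at h3
    exact h3
  refine ⟨(hder.hasStrictFDerivAt_equiv ha0).toOpenPartialHomeomorph φ, ?_, ?_, ?_⟩
  · exact (hder.hasStrictFDerivAt_equiv ha0).mem_toOpenPartialHomeomorph_source
  · simp [hφ]
  · intro z _
    have h4 : g.eval z = f.eval z - f.eval p := by simp [hg]
    rw [HasStrictFDerivAt.toOpenPartialHomeomorph_coe, hφ]
    simp only [mul_pow, Complex.cpow_nat_inv_pow _ hnpos, ha]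
    have h5 : g.eval z = (z - p) ^ n * h.eval z := by
      conv_lhs => rw [hh]
      simp
    rw [mul_div_cancel₀ _ hhp, ← h5, h4]
    ring

/-- Near `p`, the preimage of a convex set supported at `f p` is covered by few connected sets. -/
lemma local_sectors (f : Polynomial ℂ) (hd : 0 < f.natDegree) (p b : ℂ) (V : Set ℂ)
    (hV : Convex ℝ V) (hb : ∀ w ∈ V, 0 < ((w - f.eval p) * b).re) (hb0 : b ≠ 0) :
    ∃ O : Set ℂ, IsOpen O ∧ p ∈ O ∧
      ∃ E : Fin ((Polynomial.derivative f).rootMultiplicity p + 1) → Set ℂ,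
      (∀ j, IsPreconnected (E j)) ∧ (∀ j, ∀ z ∈ E j, f.eval z ∈ V) ∧
      ∀ z ∈ O, f.eval z ∈ V → ∃ j, z ∈ E j := by
  obtain ⟨e, hpe, hep, he⟩ := local_root f hd p
  set n := (Polynomial.derivative f).rootMultiplicity p + 1 with hn
  have hn0 : n ≠ 0 := by omega
  have htgt : e.target ∈ nhds (0 : ℂ) := e.open_target.mem_nhds (hep ▸ e.map_source hpe)
  obtain ⟨ε, hε, hball⟩ := Metric.mem_nhds_iff.1 htgt
  obtain ⟨a, ha⟩ := IsAlgClosed.exists_pow_nat_eq (b⁻¹) (Nat.pos_of_ne_zero hn0)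
  set L : Set ℂ := {t | f.eval p + t * b⁻¹ ∈ V ∧ ‖t * b⁻¹‖ < ε ^ n} with hL
  have hLc : Convex ℝ L := by
    intro s hs t ht x y hx hy hxy
    have hxy' : (x : ℂ) + y = 1 := by exact_mod_cast hxy
    constructor
    · have := hV hs.1 ht.1 hx hy hxy
      have h5 : f.eval p + (x • s + y • t) * b⁻¹ =
          x • (f.eval p + s * b⁻¹) + y • (f.eval p + t * b⁻¹) := by
        simp only [Complex.real_smul]
        linear_combination (-f.eval p) * hxy'
      exact h5 ▸ this
    · have h1 := (convex_ball (0 : ℂ) (ε ^ n)) (by simpa using hs.2 : s * b⁻¹ ∈ ball (0:ℂ) (ε ^ n))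
        (by simpa using ht.2 : t * b⁻¹ ∈ ball (0:ℂ) (ε ^ n)) hx hy hxy
      rw [mem_ball_zero_iff] at h1
      have h5 : (x • s + y • t) * b⁻¹ = x • (s * b⁻¹) + y • (t * b⁻¹) := by
        simp only [Complex.real_smul]
        ring
      rw [← h5] at h1
      exact h1
  have hLre : ∀ t ∈ L, 0 < t.re := by
    intro t ht
    have := hb _ ht.1
    have h2 : (f.eval p + t * b⁻¹ - f.eval p) * b = t := by field_simp; ring
    rwa [h2] at this
  set ω : ℂ := Complex.exp (2 * Real.pi * Complex.I / n) with hω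
  have hprim : IsPrimitiveRoot ω n := Complex.isPrimitiveRoot_exp n hn0
  set β : Fin n → ℂ → ℂ := fun j t => a * ω ^ (j : ℕ) * t ^ ((n : ℂ)⁻¹) with hβ
  have hβn : ∀ j t, (β j t) ^ n = t * b⁻¹ := by
    intro j t
    simp only [hβ, mul_pow, Complex.cpow_nat_inv_pow _ hn0, ha]
    rw [← pow_mul, mul_comm (j : ℕ) n, pow_mul, hprim.pow_eq_one]
    simp [mul_comm]
  have hβball : ∀ j, ∀ t ∈ L, β j t ∈ ball (0 : ℂ) ε := by
    intro j t ht
    rw [mem_ball_zero_iff]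
    have h1 : ‖β j t‖ ^ n < ε ^ n := by
      rw [← norm_pow, hβn]; exact ht.2
    exact lt_of_pow_lt_pow_left₀ n hε.le h1
  refine ⟨e.source ∩ e ⁻¹' ball 0 ε, e.isOpen_inter_preimage isOpen_ball, ⟨hpe, by simp [hep, hε]⟩,
    fun j => (fun t => e.symm (β j t)) '' L, ?_, ?_, ?_⟩
  · intro j
    refine hLc.isPreconnected.image _ ?_
    refine e.continuousOn_symm.comp ?_ (fun t ht => hball (hβball j t ht))
    refine ContinuousOn.mul continuousOn_const ?_
    refine continuousOn_id.cpow continuousOn_const ?_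
    intro t ht
    exact Or.inl (hLre t ht)
  · rintro j _ ⟨t, ht, rfl⟩
    have h1 := hball (hβball j t ht)
    simp only
    rw [he _ (e.map_target h1), e.right_inv h1, hβn]
    exact ht.1
  · rintro z ⟨hz, hzb⟩ hzV
    have hzb' : ‖e z‖ < ε := by simpa using hzb
    set t := (e z) ^ n * b with ht
    have htb : t * b⁻¹ = (e z) ^ n := by rw [ht]; field_simp
    have htL : t ∈ L := by
      refine ⟨?_, ?_⟩
      · rw [htb, ← he z hz]; exact hzV
      · rw [htb, norm_pow]
        exact pow_lt_pow_left₀ hzb' (norm_nonneg _) hn0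
    have ht0 : t ≠ 0 := by
      intro h0
      have := hLre t htL
      rw [h0] at this
      simp at this
    have ha0 : a ≠ 0 := by
      rintro rfl
      rw [zero_pow hn0] at ha
      exact inv_ne_zero hb0 ha.symm
    set s := a * t ^ ((n : ℂ)⁻¹) with hs
    have hsn : s ^ n = (e z) ^ n := by
      rw [hs, mul_pow, Complex.cpow_nat_inv_pow _ hn0, ha, ← htb, mul_comm]
    have hs0 : s ≠ 0 := by
      rw [hs]
      refine mul_ne_zero ha0 ?_
      simp [Complex.cpow_eq_zero_iff, ht0]
    have h1 : (e z / s) ^ n = 1 := by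
      rw [div_pow, hsn, div_self]
      rw [← hsn]
      exact pow_ne_zero _ hs0
    have : NeZero n := ⟨hn0⟩
    obtain ⟨i, hi, hi'⟩ := hprim.eq_pow_of_pow_eq_one h1
    refine ⟨⟨i, hi⟩, t, htL, ?_⟩
    have h2 : β ⟨i, hi⟩ t = e z := by
      simp only [hβ]
      rw [hi']
      rw [mul_right_comm, ← hs]
      field_simp
    simp only [h2]
    exact e.left_inv hz

/-- Level function whose superlevel sets are discs exhausting the right half plane. -/
noncomputable def lvl (w : ℂ) : ℝ := 2 * w.re / (Complex.normSq w + 1)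

lemma lvl_den (w : ℂ) : 0 < Complex.normSq w + 1 := by
  have := Complex.normSq_nonneg w
  linarith

lemma lvl_continuous : Continuous lvl := by
  unfold lvl
  refine Continuous.div (by fun_prop) (by fun_prop) (fun w => (lvl_den w).ne')

lemma le_lvl (τ : ℝ) (w : ℂ) : τ ≤ lvl w ↔ τ * (w.re ^ 2 + w.im ^ 2 + 1) ≤ 2 * w.re := by
  unfold lvl
  rw [le_div_iff₀ (lvl_den w), Complex.normSq_apply]
  ring_nf

lemma lt_lvl (τ : ℝ) (w : ℂ) : τ < lvl w ↔ τ * (w.re ^ 2 + w.im ^ 2 + 1) < 2 * w.re := by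
  unfold lvl
  rw [lt_div_iff₀ (lvl_den w), Complex.normSq_apply]
  ring_nf

lemma one_le_lvl (w : ℂ) : 1 ≤ lvl w ↔ w = 1 := by
  rw [le_lvl]
  constructor
  · intro h
    have h1 : (w.re - 1) ^ 2 + w.im ^ 2 ≤ 0 := by nlinarith
    have h2 : w.re - 1 = 0 := by
      have : (w.re - 1) ^ 2 = 0 := by nlinarith [sq_nonneg (w.re - 1), sq_nonneg w.im]
      exact pow_eq_zero_iff (two_ne_zero) |>.1 this
    have h3 : w.im = 0 := by
      have : w.im ^ 2 = 0 := by nlinarith [sq_nonneg (w.re - 1), sq_nonneg w.im]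
      exact pow_eq_zero_iff (two_ne_zero) |>.1 this
    apply Complex.ext
    · simp; linarith
    · simpa using h3
  · rintro rfl
    norm_num

lemma lvl_one : lvl 1 = 1 := by
  unfold lvl
  norm_num

lemma zero_lt_lvl (w : ℂ) : 0 < lvl w ↔ 0 < w.re := by
  rw [lt_lvl]
  simp

lemma lvl_convex (τ : ℝ) (hτ : 0 ≤ τ) : Convex ℝ {w | τ < lvl w} := by
  intro w hw w' hw' x y hx hy hxy
  simp only [Set.mem_ofPred_eq, lt_lvl] at *
  simp only [Complex.real_smul, Complex.add_re, Complex.add_im, Complex.mul_re, Complex.mul_im,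
    Complex.ofReal_re, Complex.ofReal_im, zero_mul, sub_zero, add_zero]
  obtain rfl : y = 1 - x := by linarith
  have h1 : (x * w.re + (1 - x) * w'.re) ^ 2 ≤ x * w.re ^ 2 + (1 - x) * w'.re ^ 2 := by
    nlinarith [mul_nonneg (mul_nonneg hx hy) (sq_nonneg (w.re - w'.re))]
  have h2 : (x * w.im + (1 - x) * w'.im) ^ 2 ≤ x * w.im ^ 2 + (1 - x) * w'.im ^ 2 := by
    nlinarith [mul_nonneg (mul_nonneg hx hy) (sq_nonneg (w.im - w'.im))]
  have h3 : τ * ((x * w.re + (1 - x) * w'.re) ^ 2 + (x * w.im + (1 - x) * w'.im) ^ 2 + 1) ≤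
      x * (τ * (w.re ^ 2 + w.im ^ 2 + 1)) + (1 - x) * (τ * (w'.re ^ 2 + w'.im ^ 2 + 1)) := by
    nlinarith [mul_le_mul_of_nonneg_left h1 hτ, mul_le_mul_of_nonneg_left h2 hτ]
  rcases eq_or_lt_of_le hx with h | h
  · subst h
    nlinarith
  · nlinarith [mul_lt_mul_of_pos_left hw h, mul_le_mul_of_nonneg_left hw'.le hy]

lemma lvl_compact (τ : ℝ) (hτ : 0 < τ) : IsCompact {w | τ ≤ lvl w} := by
  refine Metric.isCompact_of_isClosed_isBounded (isClosed_le continuous_const lvl_continuous) ?_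
  rw [isBounded_iff_forall_norm_le]
  refine ⟨2 / τ, ?_⟩
  intro w hw
  have h := (le_lvl τ w).1 hw
  have h1 : ‖w‖ ^ 2 = w.re ^ 2 + w.im ^ 2 := by
    rw [Complex.sq_norm, Complex.normSq_apply]; ring
  have h2 := Complex.re_le_norm w
  rw [le_div_iff₀ hτ]
  rw [← h1] at h
  rcases eq_or_lt_of_le (norm_nonneg w) with h0 | h0
  · rw [← h0]; norm_num
  · by_contra hcon
    push Not at hcon
    nlinarith [mul_lt_mul_of_pos_right hcon h0]

lemma lvl_support (τ : ℝ) (hτ : 0 ≤ τ) (c : ℂ) (hc : lvl c = τ) (w : ℂ) (hw : τ < lvl w) :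
    0 < ((w - c) * (starRingEnd ℂ) (1 - τ * c)).re := by
  have h1 := (lt_lvl τ w).1 hw
  have h2 := (le_lvl τ c).1 hc.ge
  have h3 : 2 * c.re ≤ τ * (c.re ^ 2 + c.im ^ 2 + 1) := by
    by_contra h
    push Not at h
    exact absurd hc ((lt_lvl τ c).2 h).ne'
  simp
  nlinarith [mul_nonneg hτ (sq_nonneg (w.re - c.re)), mul_nonneg hτ (sq_nonneg (w.im - c.im))]

lemma lvl_closure (τ : ℝ) (hτ : 0 ≤ τ) (hτ1 : τ < 1) (c : ℂ) (hc : τ ≤ lvl c) :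
    c ∈ closure {w | τ < lvl w} := by
  have ht : Tendsto (fun t : ℝ => c + (t : ℂ) * (1 - c)) (nhdsWithin 0 (Set.Ioi 0)) (nhds c) := by
    have : Continuous (fun t : ℝ => c + (t : ℂ) * (1 - c)) := by fun_prop
    have h := this.tendsto 0
    simp only [Complex.ofReal_zero, zero_mul, add_zero] at h
    exact h.mono_left nhdsWithin_le_nhds
  refine mem_closure_of_tendsto ht ?_
  have : Set.Ioc (0 : ℝ) 1 ∈ nhdsWithin (0 : ℝ) (Set.Ioi 0) := Ioc_mem_nhdsGT one_pos
  filter_upwards [this] with t ht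
  obtain ⟨h0, h1⟩ := ht
  have h2 := (le_lvl τ c).1 hc
  simp only [lt_lvl]
  simp
  have e1 : (c.re + t * (1 - c.re)) ^ 2 ≤ (1 - t) * c.re ^ 2 + t := by
    nlinarith [mul_nonneg (mul_nonneg h0.le (sub_nonneg.2 h1)) (sq_nonneg (1 - c.re))]
  have e2 : (c.im + -(t * c.im)) ^ 2 ≤ (1 - t) * c.im ^ 2 := by
    nlinarith [mul_nonneg (mul_nonneg h0.le (sub_nonneg.2 h1)) (sq_nonneg (c.im))]
  have e3 : τ * ((c.re + t * (1 - c.re)) ^ 2 + (c.im + -(t * c.im)) ^ 2 + 1) ≤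
      (1 - t) * (τ * (c.re ^ 2 + c.im ^ 2 + 1)) + t * (2 * τ) := by
    nlinarith [mul_le_mul_of_nonneg_left e1 hτ, mul_le_mul_of_nonneg_left e2 hτ]
  nlinarith [mul_le_mul_of_nonneg_left h2 (sub_nonneg.2 h1), mul_lt_mul_of_pos_left hτ1 h0]

/-- Every component of the preimage of a connected open set `V` is mapped onto `V`. -/
lemma comp_meets (f : Polynomial ℂ) (hd : 0 < f.natDegree) (V : Set ℂ) (hV : IsOpen V)
    (hVc : IsPreconnected V) (x w : ℂ) (hx : f.eval x ∈ V) (hw : w ∈ V) :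
    ∃ y ∈ connectedComponentIn {z | f.eval z ∈ V} x, f.eval y = w := by
  have hU : IsOpen {z | f.eval z ∈ V} := hV.preimage f.continuous
  set C := connectedComponentIn {z | f.eval z ∈ V} x with hC
  have hxC : x ∈ C := mem_connectedComponentIn hx
  have hCo : IsOpen C := hU.connectedComponentIn
  have hop : IsOpenMap f.eval := (f.isOpenQuotientMap_eval hd.ne').isOpenMap
  have hsub : V ⊆ f.eval '' C := by
    refine hVc.subset_of_closure_inter_subset (hop C hCo) ⟨f.eval x, hx, x, hxC, rfl⟩ ?_
    rintro v ⟨hv, hvV⟩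
    rw [(Polynomial.isClosedMap_eval f).closure_image_eq_of_continuous f.continuous] at hv
    obtain ⟨z, hz, rfl⟩ := hv
    refine ⟨z, ?_, rfl⟩
    have h1 : IsPreconnected (insert z C) :=
      isPreconnected_connectedComponentIn.subset_closure (Set.subset_insert _ _)
        (Set.insert_subset hz subset_closure)
    have h2 : insert z C ⊆ C := h1.subset_connectedComponentIn (Set.mem_insert_of_mem _ hxC)
      (Set.insert_subset hvV (connectedComponentIn_subset _ _))
    exact h2 (Set.mem_insert _ _)
  obtain ⟨y, hy, hyw⟩ := hsub hw
  exact ⟨y, hy, hyw⟩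

/-- Functions on `F` that are constant on the components of `S`. -/
def compSub (F : Finset ℂ) (S : Set ℂ) : Submodule ℝ (F → ℝ) where
  carrier := {g | ∀ x y : F, (y : ℂ) ∈ connectedComponentIn S x → g x = g y}
  add_mem' := by
    intro g h hg hh x y hxy
    simp [hg x y hxy, hh x y hxy]
  zero_mem' := by
    intro x y _
    rfl
  smul_mem' := by
    intro c g hg x y hxy
    simp [hg x y hxy]

lemma compSub_mem {F : Finset ℂ} {S : Set ℂ} {g : F → ℝ} :
    g ∈ compSub F S ↔ ∀ x y : F, (y : ℂ) ∈ connectedComponentIn S x → g x = g y := Iff.rfl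

lemma compSub_anti (F : Finset ℂ) {S S' : Set ℂ} (h : S ⊆ S') : compSub F S' ≤ compSub F S := by
  intro g hg x y hxy
  exact hg x y (connectedComponentIn_mono _ h hxy)

/-- The fibre over `1`. -/
noncomputable def fib (f : Polynomial ℂ) : Finset ℂ := (f - Polynomial.C 1).roots.toFinset

lemma fib_ne (f : Polynomial ℂ) (hd : 0 < f.natDegree) : f - Polynomial.C 1 ≠ 0 := by
  intro h
  have : f = Polynomial.C 1 := sub_eq_zero.mp h
  rw [this] at hd
  simp at hd

lemma mem_fib (f : Polynomial ℂ) (hd : 0 < f.natDegree) (z : ℂ) : z ∈ fib f ↔ f.eval z = 1 := by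
  unfold fib
  rw [Multiset.mem_toFinset, Polynomial.mem_roots (fib_ne f hd)]
  simp [Polynomial.IsRoot, sub_eq_zero]

/-- Open superlevel set. -/
def supU (f : Polynomial ℂ) (τ : ℝ) : Set ℂ := {z | τ < lvl (f.eval z)}
/-- Closed superlevel set. -/
def supK (f : Polynomial ℂ) (τ : ℝ) : Set ℂ := {z | τ ≤ lvl (f.eval z)}

lemma supU_open (f : Polynomial ℂ) (τ : ℝ) : IsOpen (supU f τ) :=
  isOpen_lt continuous_const (lvl_continuous.comp f.continuous)

lemma supK_compact (f : Polynomial ℂ) (hd : 0 < f.natDegree) (τ : ℝ) (hτ : 0 < τ) :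
    IsCompact (supK f τ) :=
  (f.isProperMap_eval (Polynomial.natDegree_pos_iff_degree_pos.1 hd)).isCompact_preimage
    (lvl_compact τ hτ)

lemma supU_rep (f : Polynomial ℂ) (hd : 0 < f.natDegree) (τ : ℝ) (hτ : 0 ≤ τ) (hτ1 : τ < 1)
    (z : ℂ) (hz : z ∈ supU f τ) :
    ∃ x : fib f, z ∈ connectedComponentIn (supU f τ) x := by
  obtain ⟨y, hy, hy1⟩ := comp_meets f hd {w | τ < lvl w}
    (isOpen_lt continuous_const lvl_continuous) (lvl_convex τ hτ).isPreconnected z 1 hz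
    (by change τ < lvl 1; rw [lvl_one]; exact hτ1)
  refine ⟨⟨y, (mem_fib f hd y).2 hy1⟩, ?_⟩
  have : connectedComponentIn (supU f τ) z = connectedComponentIn (supU f τ) y :=
    connectedComponentIn_eq hy
  change z ∈ connectedComponentIn (supU f τ) y
  rw [← this]
  exact mem_connectedComponentIn hz

lemma supK_local (f : Polynomial ℂ) (hd : 0 < f.natDegree) (τ : ℝ) (hτ : 0 ≤ τ) (hτ1 : τ < 1)
    (p : ℂ) (hp : lvl (f.eval p) = τ) :
    ∃ O : Set ℂ, IsOpen O ∧ p ∈ O ∧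
      ∃ x : Fin ((Polynomial.derivative f).rootMultiplicity p + 1) → fib f,
      ∀ z ∈ O, z ∈ supU f τ → ∃ j, z ∈ connectedComponentIn (supU f τ) (x j) := by
  have hsup := lvl_support τ hτ (f.eval p) hp
  have hb0 : (starRingEnd ℂ) (1 - τ * f.eval p) ≠ 0 := by
    intro h0
    have := hsup 1 (by rw [lvl_one]; exact hτ1)
    rw [h0] at this
    simp at this
  obtain ⟨O, hO, hpO, E, hE, hEV, hcov⟩ := local_sectors f hd p _ {w | τ < lvl w}
    (lvl_convex τ hτ) hsup hb0
  refine ⟨O, hO, hpO, ?_⟩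
  have : ∀ j, ∃ x : fib f, E j ⊆ connectedComponentIn (supU f τ) x := by
    intro j
    rcases (E j).eq_empty_or_nonempty with h | ⟨z, hz⟩
    · obtain ⟨y, hy⟩ := (f.isOpenQuotientMap_eval hd.ne').surjective 1
      exact ⟨⟨y, (mem_fib f hd y).2 hy⟩, by rw [h]; exact Set.empty_subset _⟩
    · obtain ⟨x, hx⟩ := supU_rep f hd τ hτ hτ1 z (hEV j z hz)
      refine ⟨x, ?_⟩
      rw [connectedComponentIn_eq hx]
      exact (hE j).subset_connectedComponentIn hz (hEV j)
  choose x hx using this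
  refine ⟨x, ?_⟩
  intro z hz hzU
  obtain ⟨j, hj⟩ := hcov z hz hzU
  exact ⟨j, hx j hj⟩

open Classical in
/-- Number of critical points in `S`, with multiplicity. -/
noncomputable def cnt (f : Polynomial ℂ) (S : Set ℂ) : ℕ :=
  ∑ p ∈ (Polynomial.derivative f).roots.toFinset with p ∈ S,
    (Polynomial.derivative f).rootMultiplicity p

lemma cnt_mono (f : Polynomial ℂ) {S S' : Set ℂ} (h : S ⊆ S') : cnt f S ≤ cnt f S' := by
  classical
  unfold cnt
  refine Finset.sum_le_sum_of_subset ?_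
  intro p hp
  simp only [Finset.mem_filter] at hp ⊢
  exact ⟨hp.1, h hp.2⟩

lemma cnt_union (f : Polynomial ℂ) {S S' : Set ℂ} (h : Disjoint S S') :
    cnt f (S ∪ S') = cnt f S + cnt f S' := by
  classical
  unfold cnt
  rw [← Finset.sum_union]
  · congr 1
    ext p
    simp only [Finset.mem_filter, Finset.mem_union, Set.mem_union]
    tauto
  · rw [Finset.disjoint_left]
    intro p hp hp'
    simp only [Finset.mem_filter] at hp hp'
    exact Set.disjoint_left.1 h hp.2 hp'.2

lemma cnt_univ (f : Polynomial ℂ) : cnt f Set.univ ≤ f.natDegree - 1 := by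
  classical
  have h1 : cnt f Set.univ = Multiset.card (Polynomial.derivative f).roots := by
    unfold cnt
    simp only [Set.mem_univ, Finset.filter_true]
    rw [← Multiset.toFinset_sum_count_eq]
    refine Finset.sum_congr rfl ?_
    intro p _
    rw [Polynomial.count_roots]
  rw [h1]
  exact (Polynomial.card_roots' _).trans (Polynomial.natDegree_derivative_le f)

/-- The jump inequality at a level. -/
lemma jump (f : Polynomial ℂ) (hd : 0 < f.natDegree) (τ : ℝ) (hτ : 0 ≤ τ) (hτ1 : τ < 1) :
    Module.finrank ℝ (compSub (fib f) (supU f τ)) ≤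
      Module.finrank ℝ (compSub (fib f) (supK f τ)) + cnt f {z | lvl (f.eval z) = τ} := by
  classical
  set U := supU f τ with hU
  set K := supK f τ with hK
  have hloc := supK_local f hd τ hτ hτ1
  have hne : Nonempty (fib f) := by
    obtain ⟨y, hy⟩ := (f.isOpenQuotientMap_eval hd.ne').surjective 1
    exact ⟨⟨y, (mem_fib f hd y).2 hy⟩⟩
  choose! O hO hpO x hx using hloc
  set crit : Finset ℂ := {p ∈ (Polynomial.derivative f).roots.toFinset |
    p ∈ {z | lvl (f.eval z) = τ}} with hcrit
  let I := Σ p : crit, Fin ((Polynomial.derivative f).rootMultiplicity (p : ℂ))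
  have hI : Fintype.card I = cnt f {z | lvl (f.eval z) = τ} := by
    simp only [I, Fintype.card_sigma, Fintype.card_fin]
    unfold cnt
    exact Finset.sum_coe_sort crit (fun p => (Polynomial.derivative f).rootMultiplicity p)
  let Φ : compSub (fib f) U →ₗ[ℝ] (I → ℝ) :=
    { toFun := fun g i => g.1 (x i.1 i.2.succ) - g.1 (x i.1 0)
      map_add' := by
        intro g h
        ext i
        simp
        ring
      map_smul' := by
        intro c g
        ext i
        simp
        ring }
  have hker : (LinearMap.ker Φ).map (compSub (fib f) U).subtype ≤ compSub (fib f) K := by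
    rintro _ ⟨g, hgk, rfl⟩
    have hg0 : ∀ i : I, g.1 (x i.1 i.2.succ) = g.1 (x i.1 0) := by
      intro i
      have h1 : Φ g i = 0 := by
        rw [LinearMap.mem_ker.1 hgk]; rfl
      exact sub_eq_zero.1 h1
    have hgU := compSub_mem.1 g.2
    have hcl : ∀ p ∈ K, ∀ O' : Set ℂ, IsOpen O' → p ∈ O' → ∃ z ∈ O', z ∈ U := by
      intro p hp O' hO' hpO'
      have h1 := lvl_closure τ hτ hτ1 (f.eval p) hp
      rw [_root_.mem_closure_iff] at h1
      obtain ⟨_, ⟨z, hz, rfl⟩, hw⟩ := h1 (f.eval '' O')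
        ((f.isOpenQuotientMap_eval hd.ne').isOpenMap O' hO') ⟨p, hpO', rfl⟩
      exact ⟨z, hz, hw⟩
    have hv : ∀ p ∈ K, ∃ v : ℝ, ∃ O' : Set ℂ, IsOpen O' ∧ p ∈ O' ∧ ∀ z ∈ O', z ∈ U →
        ∀ y : fib f, z ∈ connectedComponentIn U y → g.1 y = v := by
      intro p hp
      rcases lt_or_eq_of_le (show τ ≤ lvl (f.eval p) from hp) with h | h
      · obtain ⟨x0, hx0⟩ := supU_rep f hd τ hτ hτ1 p h
        refine ⟨g.1 x0, connectedComponentIn U x0, (supU_open f τ).connectedComponentIn, hx0, ?_⟩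
        intro z hz hzU y hzy
        have e1 := connectedComponentIn_eq hz
        have e2 := connectedComponentIn_eq hzy
        refine hgU y x0 ?_
        rw [e2, ← e1]
        have hx0U : (x0 : ℂ) ∈ U := by
          rw [← connectedComponentIn_nonempty_iff]; exact ⟨_, hz⟩
        exact mem_connectedComponentIn hx0U
      · have hp' := h.symm
        refine ⟨g.1 (x p 0), O p, hO p hp', hpO p hp', ?_⟩
        have hall : ∀ j, g.1 (x p j) = g.1 (x p 0) := by
          intro j
          refine Fin.cases rfl (fun i => ?_) j
          have hmem : p ∈ crit := by
            rw [hcrit, Finset.mem_filter]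
            refine ⟨?_, hp'⟩
            have : 0 < (Polynomial.derivative f).rootMultiplicity p := i.pos
            rw [Multiset.mem_toFinset, ← Multiset.count_pos, Polynomial.count_roots]
            exact this
          exact hg0 ⟨⟨p, hmem⟩, i⟩
        intro z hz hzU y hzy
        obtain ⟨j, hj⟩ := hx p hp' z hz hzU
        rw [← hall j]
        have e1 := connectedComponentIn_eq hj
        have e2 := connectedComponentIn_eq hzy
        refine hgU y (x p j) ?_
        rw [e2, ← e1]
        have hx0U : (x p j : ℂ) ∈ U := by
          rw [← connectedComponentIn_nonempty_iff]; exact ⟨_, hj⟩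
        exact mem_connectedComponentIn hx0U
    choose! v O' hO' hpO' hv' using hv
    have hvF : ∀ y : fib f, v y = g.1 y := by
      intro y
      have hyU : (y : ℂ) ∈ U := by
        change τ < lvl (f.eval y)
        rw [(mem_fib f hd y).1 y.2, lvl_one]; exact hτ1
      have hyK : (y : ℂ) ∈ K := le_of_lt (show τ < lvl (f.eval y) from hyU)
      exact (hv' y hyK y (hpO' y hyK) hyU y (mem_connectedComponentIn hyU)).symm
    rw [compSub_mem]
    intro a b hab
    change g.1 a = g.1 b
    rw [← hvF, ← hvF]
    have haK : (a : ℂ) ∈ K := by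
      rw [← connectedComponentIn_nonempty_iff]; exact ⟨_, hab⟩
    refine IsPreconnected.induction₂ (s := connectedComponentIn K a)
      isPreconnected_connectedComponentIn (fun p q => v p = v q) ?_ ?_ ?_
      (mem_connectedComponentIn haK) hab
    · intro p hp
      have hpK := connectedComponentIn_subset _ _ hp
      have h1 : O' p ∈ nhdsWithin p (connectedComponentIn K a) :=
        mem_nhdsWithin_of_mem_nhds ((hO' p hpK).mem_nhds (hpO' p hpK))
      filter_upwards [h1, self_mem_nhdsWithin] with q hq hqC
      have hqK := connectedComponentIn_subset _ _ hqC
      obtain ⟨z, hz, hzU⟩ := hcl q hqK (O' p ∩ O' q) ((hO' p hpK).inter (hO' q hqK))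
        ⟨hq, hpO' q hqK⟩
      obtain ⟨y, hy⟩ := supU_rep f hd τ hτ hτ1 z hzU
      rw [← hv' p hpK z hz.1 hzU y hy, ← hv' q hqK z hz.2 hzU y hy]
    · intro p q r _ _ _ h1 h2
      exact h1.trans h2
    · intro p q _ _ h
      exact h.symm
  have h1 := LinearMap.finrank_range_add_finrank_ker Φ
  have h2 : Module.finrank ℝ (LinearMap.range Φ) ≤ Fintype.card I := by
    have := Submodule.finrank_le (LinearMap.range Φ)
    rwa [Module.finrank_fintype_fun_eq_card] at this
  have h3 := Submodule.finrank_mono hker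
  have h4 : Module.finrank ℝ ((LinearMap.ker Φ).map (compSub (fib f) U).subtype) =
      Module.finrank ℝ (LinearMap.ker Φ) :=
    Submodule.finrank_map_subtype_eq _ _
  omega

lemma start (f : Polynomial ℂ) (hd : 0 < f.natDegree) :
    f.natDegree ≤ Module.finrank ℝ (compSub (fib f) (supK f 1)) + cnt f (supK f 1) := by
  classical
  have hKfib : supK f 1 = (fib f : Set ℂ) := by
    ext z
    rw [Finset.mem_coe, mem_fib f hd]
    exact one_le_lvl _
  have htop : compSub (fib f) (supK f 1) = ⊤ := by
    rw [eq_top_iff]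
    intro g _ x y hxy
    have h1 : (connectedComponentIn (supK f 1) x).Subsingleton := by
      have hf : (supK f 1).Finite := by rw [hKfib]; exact Finset.finite_toSet _
      exact hf.countable.isTotallyDisconnected _ (connectedComponentIn_subset _ _)
        isPreconnected_connectedComponentIn
    have hx : (x : ℂ) ∈ connectedComponentIn (supK f 1) x :=
      mem_connectedComponentIn (by rw [hKfib]; exact x.2)
    rw [Subtype.ext (h1 hx hxy)]
  rw [htop, finrank_top, Module.finrank_fintype_fun_eq_card, Fintype.card_coe]
  set g := f - Polynomial.C 1 with hg
  have hg0 : g ≠ 0 := fib_ne f hd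
  have h1 : f.natDegree = Multiset.card g.roots := by
    rw [← (IsAlgClosed.splits g).natDegree_eq_card_roots, hg, Polynomial.natDegree_sub_C]
  have h2 : Multiset.card g.roots =
      ∑ x ∈ fib f, (1 + (Polynomial.derivative f).rootMultiplicity x) := by
    rw [← Multiset.toFinset_sum_count_eq]
    refine Finset.sum_congr rfl ?_
    intro x hx
    have hr : g.IsRoot x := by
      rw [mem_fib f hd] at hx
      simp [hg, Polynomial.IsRoot, hx]
    have h3 := Polynomial.derivative_rootMultiplicity_of_root hr
    have h4 : 0 < g.rootMultiplicity x := (Polynomial.rootMultiplicity_pos hg0).2 hr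
    have h5 : Polynomial.derivative g = Polynomial.derivative f := by simp [hg]
    rw [h5] at h3
    rw [Polynomial.count_roots]
    omega
  rw [h1, h2, Finset.sum_add_distrib]
  simp only [Finset.sum_const, smul_eq_mul, mul_one]
  refine Nat.add_le_add_left ?_ _
  rw [← Finset.sum_filter_ne_zero]
  unfold cnt
  refine Finset.sum_le_sum_of_subset ?_
  intro p hp
  rw [Finset.mem_filter] at hp ⊢
  refine ⟨?_, ?_⟩
  · rw [Multiset.mem_toFinset, ← Multiset.count_pos, Polynomial.count_roots]
    exact Nat.pos_of_ne_zero hp.2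
  · rw [hKfib]; exact hp.1

lemma fib_supK (f : Polynomial ℂ) (hd : 0 < f.natDegree) (τ : ℝ) (hτ : τ ≤ 1) (x : fib f) :
    (x : ℂ) ∈ supK f τ := by
  change τ ≤ lvl (f.eval x)
  rw [(mem_fib f hd x).1 x.2, lvl_one]
  exact hτ

lemma fib_supU (f : Polynomial ℂ) (hd : 0 < f.natDegree) (τ : ℝ) (hτ : τ < 1) (x : fib f) :
    (x : ℂ) ∈ supU f τ := by
  change τ < lvl (f.eval x)
  rw [(mem_fib f hd x).1 x.2, lvl_one]
  exact hτ

lemma pair_below (f : Polynomial ℂ) (hd : 0 < f.natDegree) (τ : ℝ) (hτ : 0 < τ) (hτ1 : τ ≤ 1)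
    (x y : fib f) : ∀ᶠ σ in nhdsWithin τ (Set.Iio τ),
      (y : ℂ) ∈ connectedComponentIn (supK f σ) x → (y : ℂ) ∈ connectedComponentIn (supK f τ) x := by
  by_cases hxy : (y : ℂ) ∈ connectedComponentIn (supK f τ) x
  · exact Filter.Eventually.of_forall (fun _ _ => hxy)
  have hxK := fib_supK f hd τ hτ1 x
  have hyK := fib_supK f hd τ hτ1 y
  have hKc := supK_compact f hd τ hτ
  have : CompactSpace (supK f τ) := isCompact_iff_compactSpace.1 hKc
  rw [connectedComponentIn_eq_image hxK] at hxy
  have h1 : (⟨y, hyK⟩ : supK f τ) ∉ connectedComponent (⟨x, hxK⟩ : supK f τ) := by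
    intro h
    exact hxy ⟨_, h, rfl⟩
  rw [connectedComponent_eq_iInter_isClopen] at h1
  simp only [Set.mem_iInter, not_forall] at h1
  obtain ⟨⟨s, hs, hxs⟩, hys⟩ := h1
  change (⟨y, hyK⟩ : supK f τ) ∉ s at hys
  have hA : IsCompact (Subtype.val '' s) := hs.1.isCompact.image continuous_subtype_val
  have hB : IsCompact (Subtype.val '' sᶜ) :=
    hs.compl.1.isCompact.image continuous_subtype_val
  have hdis : Disjoint (Subtype.val '' s) (Subtype.val '' sᶜ) :=
    (Set.disjoint_image_iff Subtype.val_injective).2 disjoint_compl_right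
  obtain ⟨OA, OB, hOA, hOB, hAO, hBO, hO⟩ := SeparatedNhds.of_isCompact_isCompact hA hB hdis
  have hcov : supK f τ ⊆ OA ∪ OB := by
    intro z hz
    by_cases hzs : (⟨z, hz⟩ : supK f τ) ∈ s
    · exact Or.inl (hAO ⟨_, hzs, rfl⟩)
    · exact Or.inr (hBO ⟨⟨z, hz⟩, hzs, rfl⟩)
  have hev : ∀ᶠ σ in nhdsWithin τ (Set.Iio τ), supK f σ ⊆ OA ∪ OB := by
    have hc : IsCompact (supK f (τ / 2) \ (OA ∪ OB)) :=
      (supK_compact f hd (τ / 2) (by linarith)).diff (hOA.union hOB)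
    have hhalf : Set.Ioo (τ / 2) τ ∈ nhdsWithin τ (Set.Iio τ) := Ioo_mem_nhdsLT (by linarith)
    rcases (supK f (τ / 2) \ (OA ∪ OB)).eq_empty_or_nonempty with he | hne
    · filter_upwards [hhalf] with σ hσ z hz
      by_contra hcon
      have : z ∈ supK f (τ / 2) \ (OA ∪ OB) := ⟨hσ.1.le.trans hz, hcon⟩
      rw [he] at this
      exact this
    · obtain ⟨m, hm, hmax⟩ := hc.exists_isMaxOn hne
        (f := fun z => lvl (f.eval z)) (lvl_continuous.comp f.continuous).continuousOn
      have hmτ : lvl (f.eval m) < τ := by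
        by_contra hcon
        push Not at hcon
        exact hm.2 (hcov hcon)
      have hm' : Set.Ioo (lvl (f.eval m)) τ ∈ nhdsWithin τ (Set.Iio τ) := Ioo_mem_nhdsLT hmτ
      filter_upwards [hhalf, hm'] with σ hσ hσ' z hz
      by_contra hcon
      have h3 : lvl (f.eval z) ≤ lvl (f.eval m) := hmax ⟨hσ.1.le.trans hz, hcon⟩
      have h4 : σ ≤ lvl (f.eval z) := hz
      linarith [hσ'.1]
  filter_upwards [hev] with σ hσ hy
  exfalso
  have hxσ : (x : ℂ) ∈ supK f σ := by
    rw [← connectedComponentIn_nonempty_iff]; exact ⟨_, hy⟩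
  have h5 : connectedComponentIn (supK f σ) x ⊆ OA :=
    isPreconnected_connectedComponentIn.subset_left_of_subset_union hOA hOB hO
      ((connectedComponentIn_subset _ _).trans hσ)
      ⟨x, mem_connectedComponentIn hxσ, hAO ⟨_, hxs, rfl⟩⟩
  exact Set.disjoint_left.1 hO (h5 hy) (hBO ⟨⟨y, hyK⟩, hys, rfl⟩)

lemma compSub_below (f : Polynomial ℂ) (hd : 0 < f.natDegree) (τ : ℝ) (hτ : 0 < τ) (hτ1 : τ ≤ 1) :
    ∀ᶠ σ in nhdsWithin τ (Set.Iio τ),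
      compSub (fib f) (supK f τ) ≤ compSub (fib f) (supK f σ) := by
  have h := Filter.eventually_all.2 (fun x => Filter.eventually_all.2 (pair_below f hd τ hτ hτ1 x))
  filter_upwards [h] with σ hσ g hg x y hxy
  exact hg x y (hσ x y hxy)

lemma pair_above (f : Polynomial ℂ) (hd : 0 < f.natDegree) (τ : ℝ) (hτ1 : τ < 1)
    (x y : fib f) : ∀ᶠ σ in nhdsWithin τ (Set.Ioi τ),
      (y : ℂ) ∈ connectedComponentIn (supU f τ) x → (y : ℂ) ∈ connectedComponentIn (supK f σ) x := by
  by_cases hxy : (y : ℂ) ∈ connectedComponentIn (supU f τ) x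
  swap
  · exact Filter.Eventually.of_forall (fun _ h => absurd h hxy)
  have hxU := fib_supU f hd τ hτ1 x
  have hC : IsOpen (connectedComponentIn (supU f τ) x) := (supU_open f τ).connectedComponentIn
  have hpc : IsPathConnected (connectedComponentIn (supU f τ) x) :=
    hC.isConnected_iff_isPathConnected.1 ⟨⟨_, hxy⟩, isPreconnected_connectedComponentIn⟩
  obtain ⟨γ, hγ⟩ := hpc.joinedIn x (mem_connectedComponentIn hxU) y hxy
  have hcomp : IsCompact (Set.range γ) := isCompact_range γ.continuous
  obtain ⟨m, hm, hmin⟩ := hcomp.exists_isMinOn ⟨γ 0, 0, rfl⟩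
    (f := fun z => lvl (f.eval z)) (lvl_continuous.comp f.continuous).continuousOn
  have hmτ : τ < lvl (f.eval m) := by
    obtain ⟨t, rfl⟩ := hm
    have h0 : γ t ∈ supU f τ := connectedComponentIn_subset _ _ (hγ t)
    exact h0
  have hm' : Set.Ioo τ (lvl (f.eval m)) ∈ nhdsWithin τ (Set.Ioi τ) := Ioo_mem_nhdsGT hmτ
  filter_upwards [hm'] with σ hσ _
  have hpre : IsPreconnected (Set.range γ) := isPreconnected_range γ.continuous
  refine hpre.subset_connectedComponentIn ⟨0, by simp⟩ ?_ ⟨1, by simp⟩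
  intro z hz
  exact hσ.2.le.trans (hmin hz)

lemma compSub_above (f : Polynomial ℂ) (hd : 0 < f.natDegree) (τ : ℝ) (hτ1 : τ < 1) :
    ∀ᶠ σ in nhdsWithin τ (Set.Ioi τ),
      compSub (fib f) (supK f σ) ≤ compSub (fib f) (supU f τ) := by
  have h := Filter.eventually_all.2 (fun x => Filter.eventually_all.2 (pair_above f hd τ hτ1 x))
  filter_upwards [h] with σ hσ g hg x y hxy
  exact hg x y (hσ x y hxy)

lemma supU_of_supK (f : Polynomial ℂ) (hd : 0 < f.natDegree) (τ : ℝ) (hτ1 : τ < 1)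
    (h : ∀ σ, τ < σ → σ ≤ 1 →
      f.natDegree ≤ Module.finrank ℝ (compSub (fib f) (supK f σ)) + cnt f (supK f σ)) :
    f.natDegree ≤ Module.finrank ℝ (compSub (fib f) (supU f τ)) + cnt f (supU f τ) := by
  have h1 : Set.Ioc τ 1 ∈ nhdsWithin τ (Set.Ioi τ) := Ioc_mem_nhdsGT hτ1
  obtain ⟨σ, hσ, hσ'⟩ := ((compSub_above f hd τ hτ1).and h1).exists
  have h2 := h σ hσ'.1 hσ'.2
  have h3 := Submodule.finrank_mono hσ
  have h4 : cnt f (supK f σ) ≤ cnt f (supU f τ) :=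
    cnt_mono f (fun z hz => lt_of_lt_of_le hσ'.1 hz)
  omega

lemma supK_all (f : Polynomial ℂ) (hd : 0 < f.natDegree) (a : ℝ) (ha : 0 < a) (ha1 : a ≤ 1) :
    f.natDegree ≤ Module.finrank ℝ (compSub (fib f) (supK f a)) + cnt f (supK f a) := by
  set P : ℝ → Prop := fun τ =>
    f.natDegree ≤ Module.finrank ℝ (compSub (fib f) (supK f τ)) + cnt f (supK f τ) with hP
  change P a
  by_contra hcon
  set S : Set ℝ := {τ | a ≤ τ ∧ τ ≤ 1 ∧ ¬ P τ} with hS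
  have haS : a ∈ S := ⟨le_rfl, ha1, hcon⟩
  have hbdd : BddAbove S := ⟨1, fun τ h => h.2.1⟩
  set s := sSup S with hs
  have has : a ≤ s := le_csSup hbdd haS
  have hs1 : s ≤ 1 := csSup_le ⟨a, haS⟩ (fun τ h => h.2.1)
  have hs0 : 0 < s := ha.trans_le has
  have habove : ∀ σ, s < σ → σ ≤ 1 → P σ := by
    intro σ h1 h2
    by_contra h3
    exact absurd (le_csSup hbdd (show σ ∈ S from ⟨has.trans h1.le, h2, h3⟩)) (not_le.2 h1)
  have hPs : P s := by
    rcases eq_or_lt_of_le hs1 with h | h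
    · rw [h]; exact start f hd
    · have h1 := supU_of_supK f hd s h habove
      have h2 := jump f hd s hs0.le h
      have h3 : supK f s = supU f s ∪ {z | lvl (f.eval z) = s} := by
        ext z
        change s ≤ lvl (f.eval z) ↔ s < lvl (f.eval z) ∨ lvl (f.eval z) = s
        rw [le_iff_lt_or_eq, eq_comm]
      have h4 : Disjoint (supU f s) {z | lvl (f.eval z) = s} := by
        rw [Set.disjoint_left]
        intro z hz hz'
        exact absurd (show lvl (f.eval z) = s from hz') (ne_of_gt hz)
      have h5 := cnt_union f h4
      rw [← h3] at h5
      change _ ≤ _ + _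
      omega
  obtain ⟨l, hl, hl'⟩ := (mem_nhdsLT_iff_exists_Ioo_subset).1 (compSub_below f hd s hs0 hs1)
  have hl2 : l < s := hl
  obtain ⟨τ, hτS, hτ⟩ := exists_lt_of_lt_csSup ⟨a, haS⟩ hl2
  have hτs : τ ≤ s := le_csSup hbdd hτS
  rcases eq_or_lt_of_le hτs with h | h
  · exact hτS.2.2 (h ▸ hPs)
  · have h1 := Submodule.finrank_mono (hl' ⟨hτ, h⟩)
    have h2 : cnt f (supK f s) ≤ cnt f (supK f τ) := cnt_mono f (fun z hz => hτs.trans hz)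
    apply hτS.2.2
    change _ ≤ _ + _
    have h3 : f.natDegree ≤ _ + _ := hPs
    omega

/-- Components of a set. -/
lemma halfplane_lower (f : Polynomial ℂ) (hd : 0 < f.natDegree) :
    f.natDegree ≤ Module.finrank ℝ (compSub (fib f) (supU f 0)) + cnt f (supU f 0) :=
  supU_of_supK f hd 0 one_pos (fun σ h h1 => supK_all f hd σ h h1)

lemma halfplane_count (f : Polynomial ℂ) (hd : 0 < f.natDegree) :
    (nodalComponents (supU f 0)).Finite ∧ (nodalComponents (supU f 0)).ncard ≤ f.natDegree ∧
    f.natDegree ≤ (nodalComponents (supU f 0)).ncard + cnt f (supU f 0) := by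
  classical
  have himg : nodalComponents (supU f 0) =
      ((fib f).image (fun x => connectedComponentIn (supU f 0) x) : Finset (Set ℂ)) := by
    ext C
    simp only [Finset.coe_image, Set.mem_image, Finset.mem_coe]
    constructor
    · rintro ⟨z, hz, rfl⟩
      obtain ⟨x, hx⟩ := supU_rep f hd 0 le_rfl one_pos z hz
      exact ⟨x, x.2, connectedComponentIn_eq hx⟩
    · rintro ⟨x, hx, rfl⟩
      exact ⟨x, fib_supU f hd 0 one_pos ⟨x, hx⟩, rfl⟩
  rw [himg, Set.ncard_coe_finset]
  refine ⟨Finset.finite_toSet _, ?_, ?_⟩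
  · refine Finset.card_image_le.trans ?_
    unfold fib
    refine (Multiset.toFinset_card_le _).trans ((Polynomial.card_roots' _).trans ?_)
    rw [Polynomial.natDegree_sub_C]
  · refine (halfplane_lower f hd).trans (Nat.add_le_add_right ?_ _)
    set Q := (fib f).image (fun x => connectedComponentIn (supU f 0) x) with hQ
    have hrep : ∀ C : Q, ∃ x : fib f, connectedComponentIn (supU f 0) x = C := by
      rintro ⟨C, hC⟩
      obtain ⟨x, hx, rfl⟩ := Finset.mem_image.1 hC
      exact ⟨⟨x, hx⟩, rfl⟩
    choose r hr using hrep
    let Ψ : compSub (fib f) (supU f 0) →ₗ[ℝ] (Q → ℝ) :=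
      { toFun := fun g C => g.1 (r C)
        map_add' := by
          intro g h
          rfl
        map_smul' := by
          intro c g
          rfl }
    have hinj : Function.Injective Ψ := by
      intro g h hgh
      apply Subtype.ext
      funext x
      set C : Q := ⟨connectedComponentIn (supU f 0) x, Finset.mem_image_of_mem _ x.2⟩ with hC
      have hmem : (r C : ℂ) ∈ connectedComponentIn (supU f 0) x := by
        have : connectedComponentIn (supU f 0) (r C) = connectedComponentIn (supU f 0) x := hr C
        rw [← this]
        exact mem_connectedComponentIn (fib_supU f hd 0 one_pos _)
      rw [compSub_mem.1 g.2 x (r C) hmem, compSub_mem.1 h.2 x (r C) hmem]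
      exact congrFun hgh C
    have := LinearMap.finrank_le_finrank_of_injective hinj
    rwa [Module.finrank_fintype_fun_eq_card, Fintype.card_coe] at this

lemma cnt_neg (f : Polynomial ℂ) (S : Set ℂ) : cnt (-f) S = cnt f S := by
  classical
  unfold cnt
  rw [Polynomial.derivative_neg, Polynomial.roots_neg]
  refine Finset.sum_congr rfl ?_
  intro p _
  rw [← Polynomial.count_roots, ← Polynomial.count_roots, Polynomial.roots_neg]

lemma comp_split {X : Type*} [TopologicalSpace X] {U V : Set X} (hU : IsOpen U) (hV : IsOpen V)
    (hUV : Disjoint U V) {x : X} (hx : x ∈ U) :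
    connectedComponentIn (U ∪ V) x = connectedComponentIn U x := by
  apply Set.Subset.antisymm
  · have hx' : x ∈ U ∪ V := Or.inl hx
    refine isPreconnected_connectedComponentIn.subset_connectedComponentIn
      (mem_connectedComponentIn hx') ?_
    exact isPreconnected_connectedComponentIn.subset_left_of_subset_union hU hV hUV
      (connectedComponentIn_subset _ _) ⟨x, mem_connectedComponentIn hx', hx⟩
  · exact connectedComponentIn_mono _ Set.subset_union_left

lemma nodal_union {X : Type*} [TopologicalSpace X] {U V : Set X} (hU : IsOpen U) (hV : IsOpen V)
    (hUV : Disjoint U V) :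
    nodalComponents (U ∪ V) = nodalComponents U ∪ nodalComponents V := by
  ext C
  constructor
  · rintro ⟨x, hx | hx, rfl⟩
    · exact Or.inl ⟨x, hx, (comp_split hU hV hUV hx).symm⟩
    · refine Or.inr ⟨x, hx, ?_⟩
      rw [Set.union_comm]
      exact (comp_split hV hU hUV.symm hx).symm
  · rintro (⟨x, hx, rfl⟩ | ⟨x, hx, rfl⟩)
    · exact ⟨x, Or.inl hx, comp_split hU hV hUV hx⟩
    · refine ⟨x, Or.inr hx, ?_⟩
      rw [Set.union_comm]
      exact comp_split hV hU hUV.symm hx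

lemma nodal_disjoint {X : Type*} [TopologicalSpace X] {U V : Set X} (hUV : Disjoint U V) :
    Disjoint (nodalComponents U) (nodalComponents V) := by
  rw [Set.disjoint_left]
  rintro C ⟨x, hx, rfl⟩ ⟨y, hy, hxy⟩
  have h1 := mem_connectedComponentIn hx
  have h2 : x ∈ V := connectedComponentIn_subset _ _ (hxy ▸ h1)
  exact Set.disjoint_left.1 hUV hx h2

lemma complex_count (f : Polynomial ℂ) (hd : 0 < f.natDegree) :
    (nodalComponents {z | (f.eval z).re ≠ 0}).ncard ≤ 2 * f.natDegree ∧
    f.natDegree + 1 ≤ (nodalComponents {z | (f.eval z).re ≠ 0}).ncard := by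
  have hd' : 0 < (-f).natDegree := by rwa [Polynomial.natDegree_neg]
  obtain ⟨a1, a2, a3⟩ := halfplane_count f hd
  obtain ⟨b1, b2, b3⟩ := halfplane_count (-f) hd'
  rw [Polynomial.natDegree_neg] at b2 b3
  rw [cnt_neg] at b3
  have hdis : Disjoint (supU f 0) (supU (-f) 0) := by
    rw [Set.disjoint_left]
    intro z hz hz'
    have h1 := (zero_lt_lvl _).1 hz
    have h2 := (zero_lt_lvl _).1 hz'
    rw [Polynomial.eval_neg, Complex.neg_re] at h2
    linarith
  have hset : {z | (f.eval z).re ≠ 0} = supU f 0 ∪ supU (-f) 0 := by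
    ext z
    change (f.eval z).re ≠ 0 ↔ 0 < lvl _ ∨ 0 < lvl _
    rw [zero_lt_lvl, zero_lt_lvl, Polynomial.eval_neg, Complex.neg_re, neg_pos, or_comm]
    exact ne_iff_lt_or_gt
  have hn : (nodalComponents {z | (f.eval z).re ≠ 0}).ncard =
      (nodalComponents (supU f 0)).ncard + (nodalComponents (supU (-f) 0)).ncard := by
    rw [hset, nodal_union (supU_open f 0) (supU_open (-f) 0) hdis,
      Set.ncard_union_eq (nodal_disjoint hdis) a1 b1]
  have h1 := cnt_union f hdis
  have h2 := cnt_mono f (Set.subset_univ (supU f 0 ∪ supU (-f) 0))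
  have h3 := cnt_univ f
  omega

lemma nodal_homeo {X Y : Type*} [TopologicalSpace X] [TopologicalSpace Y] (e : X ≃ₜ Y)
    (S : Set X) : (nodalComponents (e '' S)).ncard = (nodalComponents S).ncard := by
  have : nodalComponents (e '' S) = (fun C => e '' C) '' nodalComponents S := by
    ext C
    constructor
    · rintro ⟨_, ⟨x, hx, rfl⟩, rfl⟩
      exact ⟨_, ⟨x, hx, rfl⟩, e.image_connectedComponentIn hx⟩
    · rintro ⟨_, ⟨x, hx, rfl⟩, rfl⟩
      exact ⟨_, ⟨x, hx, rfl⟩, (e.image_connectedComponentIn hx).symm⟩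
  rw [this]
  exact Set.ncard_image_of_injective _ (Set.image_injective.2 e.injective)

lemma chain_rule {g : Fin 2 → MvPolynomial (Fin 2) ℂ} (i : Fin 2) (P : MvPolynomial (Fin 2) ℝ) :
    MvPolynomial.pderiv i (MvPolynomial.aeval g P) =
      ∑ j, MvPolynomial.aeval g (MvPolynomial.pderiv j P) * MvPolynomial.pderiv i (g j) := by
  induction P using MvPolynomial.induction_on with
  | C a =>
    rw [MvPolynomial.aeval_C]
    have : (algebraMap ℝ (MvPolynomial (Fin 2) ℂ)) a = MvPolynomial.C (a : ℂ) := rfl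
    rw [this]
    simp
  | add p q hp hq =>
    simp only [map_add, hp, hq, add_mul, Finset.sum_add_distrib]
  | mul_X p k hp =>
    simp only [map_mul, MvPolynomial.aeval_X, MvPolynomial.pderiv_mul, hp, map_add,
      Fin.sum_univ_two, MvPolynomial.pderiv_X]
    fin_cases k <;> simp <;> ring

noncomputable def gz : Fin 2 → MvPolynomial (Fin 2) ℂ :=
  ![MvPolynomial.C (1/2) * (MvPolynomial.X 0 + MvPolynomial.X 1),
    MvPolynomial.C (-Complex.I/2) * (MvPolynomial.X 0 - MvPolynomial.X 1)]

lemma mixed_zero (P : MvPolynomial (Fin 2) ℝ) (hP : IsHarmonicPoly P) :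
    MvPolynomial.pderiv 0 (MvPolynomial.pderiv 1 (MvPolynomial.aeval gz P)) = 0 := by
  have h00 : MvPolynomial.pderiv 0 (gz 0) = MvPolynomial.C (1/2) := by
    simp [gz, MvPolynomial.pderiv_X]
  have h10 : MvPolynomial.pderiv 1 (gz 0) = MvPolynomial.C (1/2) := by
    simp [gz, MvPolynomial.pderiv_X]
  have h01 : MvPolynomial.pderiv 0 (gz 1) = MvPolynomial.C (-Complex.I/2) := by
    simp [gz, MvPolynomial.pderiv_X]
  have h11 : MvPolynomial.pderiv 1 (gz 1) = - MvPolynomial.C (-Complex.I/2) := by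
    simp [gz, MvPolynomial.pderiv_X]
  unfold IsHarmonicPoly at hP
  rw [Fin.sum_univ_two] at hP
  have hcomm : MvPolynomial.pderiv 0 (MvPolynomial.pderiv 1 P) =
      MvPolynomial.pderiv 1 (MvPolynomial.pderiv 0 P) := by
    ext m
    simp only [MvPolynomial.coeff_pderiv]
    rw [add_right_comm m]
    simp
    ring
  have hc : (MvPolynomial.C (-Complex.I/2) * MvPolynomial.C (-Complex.I/2) :
      MvPolynomial (Fin 2) ℂ) = - (MvPolynomial.C (1/2) * MvPolynomial.C (1/2)) := by
    rw [← MvPolynomial.C_mul, ← MvPolynomial.C_mul, ← MvPolynomial.C_neg]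
    congr 1
    ring_nf
    rw [Complex.I_sq]
    ring
  have h2 := congrArg (MvPolynomial.aeval gz) hP
  rw [map_add, map_zero] at h2
  rw [chain_rule, Fin.sum_univ_two, h10, h11, map_add, MvPolynomial.pderiv_mul,
    MvPolynomial.pderiv_mul, chain_rule, chain_rule, Fin.sum_univ_two, Fin.sum_univ_two,
    h00, h01, hcomm]
  simp only [map_neg, MvPolynomial.pderiv_C, mul_zero, neg_zero, add_zero]
  linear_combination (MvPolynomial.C (1/2) * MvPolynomial.C (1/2)) * h2 -
    (MvPolynomial.aeval gz (MvPolynomial.pderiv 1 (MvPolynomial.pderiv 1 P))) * hc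

lemma split_eval (Q : MvPolynomial (Fin 2) ℂ)
    (h : MvPolynomial.pderiv 0 (MvPolynomial.pderiv 1 Q) = 0) (z w : ℂ) :
    MvPolynomial.eval ![z, w] Q = MvPolynomial.eval ![z, 0] Q + MvPolynomial.eval ![0, w] Q
      - MvPolynomial.eval ![0, 0] Q := by
  have hco : ∀ m ∈ Q.support, m 0 = 0 ∨ m 1 = 0 := by
    intro m hm
    by_contra hcon
    push Not at hcon
    have h1 := congrArg (MvPolynomial.coeff (m - Finsupp.single 0 1 - Finsupp.single 1 1)) h
    rw [MvPolynomial.coeff_pderiv, MvPolynomial.coeff_pderiv, MvPolynomial.coeff_zero] at h1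
    have h2 : m - Finsupp.single 0 1 - Finsupp.single 1 1 + Finsupp.single 0 1 + Finsupp.single 1 1
        = m := by
      ext i
      fin_cases i
      · simp; omega
      · simp; omega
    rw [h2] at h1
    rcases mul_eq_zero.1 h1 with h3 | h3
    · rcases mul_eq_zero.1 h3 with h4 | h4
      · exact (MvPolynomial.mem_support_iff.1 hm) h4
      · exact Nat.cast_add_one_ne_zero _ h4
    · exact Nat.cast_add_one_ne_zero _ h3
  simp only [MvPolynomial.eval_eq', Fin.prod_univ_two]
  rw [← Finset.sum_add_distrib, ← Finset.sum_sub_distrib]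
  refine Finset.sum_congr rfl ?_
  intro m hm
  rcases hco m hm with h0 | h0 <;> simp [h0]

noncomputable def hol (P : MvPolynomial (Fin 2) ℝ) : Polynomial ℂ :=
  MvPolynomial.aeval ![Polynomial.C (1/2) * Polynomial.X,
    Polynomial.C (-Complex.I/2) * Polynomial.X] P

lemma hol_eval (P : MvPolynomial (Fin 2) ℝ) (z : ℂ) :
    (hol P).eval z = MvPolynomial.aeval ![z / 2, -Complex.I / 2 * z] P := by
  unfold hol
  induction P using MvPolynomial.induction_on with
  | C a =>
    simp only [MvPolynomial.aeval_C]
    have : (algebraMap ℝ (Polynomial ℂ)) a = Polynomial.C (a : ℂ) := rfl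
    rw [this]
    simp
  | add p q hp hq => simp only [map_add, Polynomial.eval_add, hp, hq]
  | mul_X p k hp =>
    simp only [map_mul, MvPolynomial.aeval_X, Polynomial.eval_mul, hp]
    fin_cases k <;> simp
    left; ring

lemma gz_eval (P : MvPolynomial (Fin 2) ℝ) (z w : ℂ) :
    MvPolynomial.eval ![z, w] (MvPolynomial.aeval gz P) =
      MvPolynomial.aeval ![(z + w) / 2, -Complex.I / 2 * (z - w)] P := by
  induction P using MvPolynomial.induction_on with
  | C a =>
    simp only [MvPolynomial.aeval_C]
    have : (algebraMap ℝ (MvPolynomial (Fin 2) ℂ)) a = MvPolynomial.C (a : ℂ) := rfl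
    rw [this]
    simp
  | add p q hp hq => simp [hp, hq]
  | mul_X p k hp =>
    simp only [map_mul, MvPolynomial.aeval_X, hp]
    fin_cases k <;> simp [gz]
    left; ring

lemma aeval_conj (P : MvPolynomial (Fin 2) ℝ) (a b : ℂ) :
    MvPolynomial.aeval ![(starRingEnd ℂ) a, (starRingEnd ℂ) b] P =
      (starRingEnd ℂ) (MvPolynomial.aeval ![a, b] P) := by
  induction P using MvPolynomial.induction_on with
  | C a => simp
  | add p q hp hq => simp [hp, hq]
  | mul_X p k hp =>
    simp only [map_mul, MvPolynomial.aeval_X, hp]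
    fin_cases k <;> simp

lemma aeval_real (P : MvPolynomial (Fin 2) ℝ) (a b : ℝ) :
    MvPolynomial.aeval ![(a : ℂ), (b : ℂ)] P = ((MvPolynomial.eval ![a, b] P : ℝ) : ℂ) := by
  induction P using MvPolynomial.induction_on with
  | C a => simp
  | add p q hp hq => simp [hp, hq]
  | mul_X p k hp =>
    simp only [map_mul, MvPolynomial.aeval_X, hp]
    fin_cases k <;> simp

lemma real_part (P : MvPolynomial (Fin 2) ℝ) (hP : IsHarmonicPoly P) (x y : ℝ) :
    MvPolynomial.eval ![x, y] P =
      2 * ((hol P).eval (x + y * Complex.I)).re - MvPolynomial.eval ![0, 0] P := by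
  set z : ℂ := x + y * Complex.I with hz
  have hzc : (starRingEnd ℂ) z = x - y * Complex.I := by simp [hz, sub_eq_add_neg]
  have h := split_eval _ (mixed_zero P hP) z ((starRingEnd ℂ) z)
  simp only [gz_eval] at h
  have e1 : (![(z + (starRingEnd ℂ) z) / 2, -Complex.I / 2 * (z - (starRingEnd ℂ) z)]
      : Fin 2 → ℂ) = ![(x : ℂ), (y : ℂ)] := by
    rw [hzc, hz]
    congr 1
    · ring
    · congr 1
      ring_nf
      rw [Complex.I_sq]
      ring
  have e2 : (![(z + 0) / 2, -Complex.I / 2 * (z - 0)] : Fin 2 → ℂ) =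
      ![z / 2, -Complex.I / 2 * z] := by simp
  have e3 : (![(0 + (starRingEnd ℂ) z) / 2, -Complex.I / 2 * (0 - (starRingEnd ℂ) z)]
      : Fin 2 → ℂ) =
      ![(starRingEnd ℂ) (z / 2), (starRingEnd ℂ) (-Complex.I / 2 * z)] := by
    have h2 : (starRingEnd ℂ) 2 = 2 := Complex.conj_ofNat 2
    congr 1
    · simp [h2]
    · congr 1
      simp [h2]
      ring
  have e4 : (![(0 + 0) / 2, -Complex.I / 2 * (0 - 0)] : Fin 2 → ℂ) =
      ![((0 : ℝ) : ℂ), ((0 : ℝ) : ℂ)] := by simp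
  rw [e1, e2, e3, e4, aeval_conj, aeval_real, aeval_real, ← hol_eval] at h
  have h2 := congrArg Complex.re h
  simp only [Complex.ofReal_re, Complex.sub_re, Complex.add_re, Complex.conj_re] at h2
  rw [h2]
  ring

lemma hol_natDegree (P : MvPolynomial (Fin 2) ℝ) : (hol P).natDegree ≤ P.totalDegree := by
  unfold hol
  rw [MvPolynomial.aeval_def, MvPolynomial.eval₂_eq']
  refine Polynomial.natDegree_sum_le_of_forall_le _ _ ?_
  intro m hm
  have h1 : (∏ i, ![Polynomial.C (1/2 : ℂ) * Polynomial.X,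
    Polynomial.C (-Complex.I/2) * Polynomial.X] i ^ m i).natDegree ≤ m 0 + m 1 := by
    rw [Fin.prod_univ_two]
    refine Polynomial.natDegree_mul_le.trans (Nat.add_le_add ?_ ?_)
    · refine Polynomial.natDegree_pow_le.trans ?_
      have : (Polynomial.C (1/2 : ℂ) * Polynomial.X).natDegree ≤ 1 :=
        (Polynomial.natDegree_C_mul_le _ _).trans Polynomial.natDegree_X_le
      exact (Nat.mul_le_mul_left _ this).trans (by simp)
    · refine Polynomial.natDegree_pow_le.trans ?_
      have : (Polynomial.C (-Complex.I/2 : ℂ) * Polynomial.X).natDegree ≤ 1 :=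
        (Polynomial.natDegree_C_mul_le _ _).trans Polynomial.natDegree_X_le
      exact (Nat.mul_le_mul_left _ this).trans (by simp)
  have h2 : m 0 + m 1 ≤ P.totalDegree := by
    have := MvPolynomial.le_totalDegree hm
    rw [Finsupp.sum_fintype _ _ (by simp), Fin.sum_univ_two] at this
    exact this
  have h3 : (algebraMap ℝ (Polynomial ℂ)) (MvPolynomial.coeff m P) =
    Polynomial.C ((MvPolynomial.coeff m P : ℝ) : ℂ) := rfl
  rw [h3]
  exact (Polynomial.natDegree_C_mul_le _ _).trans (h1.trans h2)

lemma totalDegree_aeval_le (F : Polynomial ℂ) (q : MvPolynomial (Fin 2) ℂ)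
    (hq : q.totalDegree ≤ 1) : (Polynomial.aeval q F).totalDegree ≤ F.natDegree := by
  rw [Polynomial.aeval_eq_sum_range]
  refine MvPolynomial.totalDegree_finsetSum_le ?_
  intro i hi
  refine (MvPolynomial.totalDegree_smul_le _ _).trans ?_
  refine (MvPolynomial.totalDegree_pow _ _).trans ?_
  have : i ≤ F.natDegree := by rw [Finset.mem_range] at hi; omega
  exact (Nat.mul_le_mul_left i hq).trans (by omega)

lemma hol_conj_eval (P : MvPolynomial (Fin 2) ℝ) (w : ℂ) :
    ((hol P).map (starRingEnd ℂ)).eval w = MvPolynomial.aeval ![w / 2, Complex.I / 2 * w] P := by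
  have h := Polynomial.eval₂_at_apply (p := hol P) (starRingEnd ℂ) ((starRingEnd ℂ) w)
  rw [Complex.conj_conj] at h
  have h2 : (starRingEnd ℂ) 2 = 2 := Complex.conj_ofNat 2
  rw [Polynomial.eval_map, h, hol_eval, ← aeval_conj]
  simp [h2]

lemma complexified (P : MvPolynomial (Fin 2) ℝ) (hP : IsHarmonicPoly P) :
    MvPolynomial.map (algebraMap ℝ ℂ) P =
      Polynomial.aeval (MvPolynomial.X 0 + MvPolynomial.C Complex.I * MvPolynomial.X 1) (hol P) +
      Polynomial.aeval (MvPolynomial.X 0 - MvPolynomial.C Complex.I * MvPolynomial.X 1)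
        ((hol P).map (starRingEnd ℂ)) -
      MvPolynomial.C ((MvPolynomial.eval ![0, 0] P : ℝ) : ℂ) := by
  apply MvPolynomial.funext
  intro v
  have haev : ∀ (q : MvPolynomial (Fin 2) ℂ) (F : Polynomial ℂ),
      MvPolynomial.eval v (Polynomial.aeval q F) = F.eval (MvPolynomial.eval v q) := by
    intro q F
    rw [Polynomial.aeval_def, Polynomial.hom_eval₂]
    have : (MvPolynomial.eval v).comp (algebraMap ℂ (MvPolynomial (Fin 2) ℂ)) = RingHom.id ℂ := by
      ext <;> simp
    rw [this]
    rfl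
  have h := split_eval _ (mixed_zero P hP) (v 0 + Complex.I * v 1) (v 0 - Complex.I * v 1)
  simp only [gz_eval] at h
  rw [map_sub, map_add, haev, haev, hol_eval, hol_conj_eval, MvPolynomial.eval_C, ← aeval_real]
  have e1 : (![(v 0 + Complex.I * v 1 + (v 0 - Complex.I * v 1)) / 2,
      -Complex.I / 2 * (v 0 + Complex.I * v 1 - (v 0 - Complex.I * v 1))] : Fin 2 → ℂ) = v := by
    ext i
    fin_cases i
    · simp
    · simp
      ring_nf
      rw [Complex.I_sq]
      ring
  rw [e1] at h
  have e0 : MvPolynomial.eval v (MvPolynomial.map (algebraMap ℝ ℂ) P) =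
      MvPolynomial.aeval v P := by
    rw [MvPolynomial.eval_map, MvPolynomial.aeval_def]
  rw [e0, h]
  simp
  ring_nf

lemma totalDegree_le_hol (P : MvPolynomial (Fin 2) ℝ) (hP : IsHarmonicPoly P) :
    P.totalDegree ≤ (hol P).natDegree := by
  have h1 : (MvPolynomial.map (algebraMap ℝ ℂ) P).totalDegree = P.totalDegree :=
    by
    unfold MvPolynomial.totalDegree
    rw [MvPolynomial.support_map_of_injective P (algebraMap ℝ ℂ).injective]
  have hX : ∀ c : ℂ, (MvPolynomial.C c * MvPolynomial.X 1 : MvPolynomial (Fin 2) ℂ).totalDegree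
      ≤ 1 := by
    intro c
    refine (MvPolynomial.totalDegree_mul _ _).trans ?_
    simp
  rw [← h1, complexified P hP]
  refine (MvPolynomial.totalDegree_sub _ _).trans (max_le ?_ (by simp))
  refine (MvPolynomial.totalDegree_add _ _).trans (max_le ?_ ?_)
  · exact totalDegree_aeval_le _ _
      ((MvPolynomial.totalDegree_add _ _).trans (max_le (by simp) (hX _)))
  · exact (totalDegree_aeval_le _ _
      ((MvPolynomial.totalDegree_sub _ _).trans (max_le (by simp) (hX _)))).trans
      Polynomial.natDegree_map_le

/-- **Remark after Proposition 5.3**: for a nonconstant harmonic polynomial of degree `d` on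
ℝ² whose set `{u ≠ 0}` has `k` connected components, one has `k/2 ≤ d ≤ k - 1`
(equivalently `k ≤ 2d` and `d + 1 ≤ k`), and both equalities hold simultaneously
if and only if `d = 1`. -/
theorem degree_components_bounds (d k : ℕ) (hd : 1 ≤ d)
    (P : MvPolynomial (Fin 2) ℝ) (hP : IsHarmonicPoly P) (hdeg : P.totalDegree = d)
    (hfin : (nodalComponents {x | polyFun P x ≠ 0}).Finite)
    (hcard : (nodalComponents {x | polyFun P x ≠ 0}).ncard = k) :
    k ≤ 2 * d ∧ d + 1 ≤ k ∧ ((k = 2 * d ∧ k = d + 1) ↔ d = 1) := by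
  have hdegP : (hol P).natDegree = d :=
    le_antisymm (hdeg ▸ hol_natDegree P) (hdeg ▸ totalDegree_le_hol P hP)
  set f : Polynomial ℂ :=
    Polynomial.C 2 * hol P - Polynomial.C ((MvPolynomial.eval ![0, 0] P : ℝ) : ℂ) with hf
  have hfd : f.natDegree = d := by
    rw [hf, Polynomial.natDegree_sub_C, Polynomial.natDegree_C_mul two_ne_zero, hdegP]
  have hre : ∀ x y : ℝ, MvPolynomial.eval ![x, y] P = (f.eval (x + y * Complex.I)).re := by
    intro x y
    rw [real_part P hP x y, hf]
    simp
  let e : ℂ ≃ₜ EuclideanSpace ℝ (Fin 2) := Complex.orthonormalBasisOneI.repr.toHomeomorph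
  have hset : {x | polyFun P x ≠ 0} = e '' {z | (f.eval z).re ≠ 0} := by
    rw [e.image_eq_preimage_symm]
    ext x
    have hx : e.symm x = x 0 + x 1 * Complex.I := by
      change Complex.orthonormalBasisOneI.repr.symm x = _
      simp
    change polyFun P x ≠ 0 ↔ (f.eval (e.symm x)).re ≠ 0
    rw [hx, ← hre]
    have : (fun i => x i) = ![x 0, x 1] := by
      ext i
      fin_cases i <;> rfl
    unfold polyFun
    rw [this]
  have hc := complex_count f (by omega)
  rw [hset, nodal_homeo] at hcard
  rw [hcard, hfd] at hc
  omega
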